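/- Fix ρ ∈ (0,1) and α ∈ (0,1). Let (α_n) be a sequence in (0,1) with n·α_n → α as n → ∞, and let c_n be defined by Φ(−c_n) = α_n. Then limsup_{n→∞} H_n''(ρ, c_n) ≤ 0, where H_n''(ρ, c_n) denotes the second derivative of the function ρ ↦ H_n(ρ, c_n) evaluated at ρ. -/

import Mathlib

open MeasureTheory Filter

/-- The standard normal density. -/
noncomputable def phi (x : ℝ) : ℝ := (Real.sqrt (2 * Real.pi))⁻¹ * Real.exp (-x ^ 2 / 2)

/-- The standard normal cumulative distribution function. -/
noncomputable def Phi (x : ℝ) : ℝ := ∫ t in Set.Iic x, phi t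

/-- d(ρ,c,z) = (c + √ρ·z)/√(1−ρ). -/
noncomputable def dd (ρ c z : ℝ) : ℝ := (c + Real.sqrt ρ * z) / Real.sqrt (1 - ρ)

/-- G(ρ,c,z) = (c + z/√ρ)/(2(1−ρ)^{3/2}). -/
noncomputable def G (ρ c z : ℝ) : ℝ :=
  (c + z / Real.sqrt ρ) / (2 * (1 - ρ) ^ ((3 : ℝ) / 2))

/-- H_n(ρ,c) = ∫ Φ(d(ρ,c,z))^n φ(z) dz. -/
noncomputable def Hn (n : ℕ) (ρ c : ℝ) : ℝ := ∫ z : ℝ, (Phi (dd ρ c z)) ^ n * phi z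

lemma phi_eq_gauss : phi = ProbabilityTheory.gaussianPDFReal 0 1 := by
  funext x
  simp [phi, ProbabilityTheory.gaussianPDFReal]

lemma phi_integrable : Integrable phi := by
  rw [phi_eq_gauss]; exact ProbabilityTheory.integrable_gaussianPDFReal 0 1

lemma phi_integral : ∫ x, phi x = 1 := by
  rw [phi_eq_gauss]; exact ProbabilityTheory.integral_gaussianPDFReal_eq_one 0 one_ne_zero

lemma phi_pos (x : ℝ) : 0 < phi x := by
  unfold phi; positivity

lemma phi_neg (x : ℝ) : phi (-x) = phi x := by simp [phi]

lemma phi_cont : Continuous phi := by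
  unfold phi; fun_prop

lemma phi_le (x : ℝ) : phi x ≤ Real.exp (-x ^ 2 / 2) := by
  unfold phi
  have h : (Real.sqrt (2 * Real.pi))⁻¹ ≤ 1 := by
    apply inv_le_one_of_one_le₀
    rw [Real.one_le_sqrt]
    nlinarith [Real.pi_gt_three]
  nlinarith [Real.exp_pos (-x ^ 2 / 2)]

lemma phi_hasDerivAt (x : ℝ) : HasDerivAt phi (-x * phi x) x := by
  unfold phi
  have h : HasDerivAt (fun x : ℝ => -x ^ 2 / 2) (-x) x := by
    have := ((hasDerivAt_pow 2 x).neg).div_const 2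
    refine this.congr_deriv ?_
    push_cast
    ring
  refine ((h.exp).const_mul ((Real.sqrt (2 * Real.pi))⁻¹)).congr_deriv ?_
  ring

lemma Phi_nonneg (x : ℝ) : 0 ≤ Phi x :=
  setIntegral_nonneg measurableSet_Iic (fun t _ => (phi_pos t).le)

lemma Phi_pos (x : ℝ) : 0 < Phi x := by
  unfold Phi
  rw [setIntegral_pos_iff_support_of_nonneg_ae (ae_of_all _ fun t => (phi_pos t).le)
    phi_integrable.integrableOn]
  have : Function.support phi = Set.univ := by
    ext t; simp [(phi_pos t).ne']
  simp [this]

lemma Phi_mono : Monotone Phi := by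
  intro x y h
  exact setIntegral_mono_set phi_integrable.integrableOn (ae_of_all _ fun t => (phi_pos t).le)
    (Set.Iic_subset_Iic.2 h).eventuallyLE

lemma Phi_neg (x : ℝ) : Phi (-x) = ∫ t in Set.Ioi x, phi t := by
  unfold Phi
  rw [← integral_comp_neg_Ioi]
  simp [phi_neg]

lemma Phi_add (x : ℝ) : Phi x + Phi (-x) = 1 := by
  rw [Phi_neg, ← phi_integral, Phi,
    ← integral_add_compl (measurableSet_Iic (a := x)) phi_integrable, Set.compl_Iic]

lemma Phi_le_one (x : ℝ) : Phi x ≤ 1 := by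
  linarith [Phi_add x, Phi_nonneg (-x)]

lemma Phi_scale (κ c : ℝ) (hκ : 1 < κ) (hc : 0 < c) :
    Phi (-(κ * c)) ≤ κ * Real.exp (-(κ ^ 2 - 1) * c ^ 2 / 2) * Phi (-c) := by
  have hk0 : 0 < κ := by linarith
  rw [Phi_neg, Phi_neg, ← integral_comp_mul_left_Ioi' phi c hk0, smul_eq_mul, mul_assoc]
  apply mul_le_mul_of_nonneg_left _ hk0.le
  rw [← integral_const_mul]
  apply setIntegral_mono_on
  · exact (phi_integrable.comp_mul_left' hk0.ne').integrableOn
  · exact (phi_integrable.const_mul _).integrableOn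
  · exact measurableSet_Ioi
  · intro x hx
    have hx : c < x := hx
    unfold phi
    rw [mul_left_comm, ← Real.exp_add]
    apply mul_le_mul_of_nonneg_left _ (by positivity)
    apply Real.exp_le_exp.2
    have h1 : c ^ 2 ≤ x ^ 2 := by nlinarith
    have h2 : 0 ≤ κ ^ 2 - 1 := by nlinarith
    nlinarith [mul_le_mul_of_nonneg_left h1 h2]

lemma poly_le_exp (z : ℝ) : (1 + |z|) ^ 4 ≤ 16384 * Real.exp (z ^ 2 / 32) := by
  have h1 : 1 + z ^ 2 / 64 ≤ Real.exp (z ^ 2 / 64) := by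
    linarith [Real.add_one_le_exp (z ^ 2 / 64)]
  have h2 : (1 + |z|) ^ 2 ≤ 128 * Real.exp (z ^ 2 / 64) := by
    have : (1 + |z|) ^ 2 ≤ 2 * (1 + z ^ 2) := by
      nlinarith [sq_abs z, sq_nonneg (1 - |z|)]
    nlinarith [sq_nonneg z]
  calc (1 + |z|) ^ 4 = ((1 + |z|) ^ 2) ^ 2 := by ring
    _ ≤ (128 * Real.exp (z ^ 2 / 64)) ^ 2 := by gcongr
    _ = 16384 * Real.exp (z ^ 2 / 32) := by
      rw [mul_pow, ← Real.exp_nat_mul]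
      congr 1
      · norm_num
      · congr 1; push_cast; ring

noncomputable def k1 (s s1 w w1 : ℝ) : ℝ := (s1 - s * w * w1) * phi w
noncomputable def k2 (s s1 s2 w w1 w2 : ℝ) : ℝ :=
  (s2 - 2 * s1 * w * w1 - s * w1 ^ 2 - s * w * w2 + s * w ^ 2 * w1 ^ 2) * phi w

lemma k1_bound (s s1 w w1 M q : ℝ) (hM : 1 ≤ M) (hq : 1 ≤ q) (hs : |s| ≤ M) (hs1 : |s1| ≤ M)
    (hw : |w| ≤ M * q) (hw1 : |w1| ≤ M * q) :
    |k1 s s1 w w1| ≤ 6 * M ^ 5 * q ^ 4 * phi w := by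
  unfold k1
  rw [abs_mul, abs_of_pos (phi_pos w)]
  apply mul_le_mul_of_nonneg_right _ (phi_pos w).le
  have e1 : |s * w * w1| ≤ M * (M * q) * (M * q) := by
    rw [abs_mul, abs_mul]; gcongr
  have b0 : M ≤ M ^ 5 * q ^ 4 := by
    calc M = M ^ 1 * 1 := by ring
      _ ≤ M ^ 5 * q ^ 4 := by
        gcongr
        · norm_num
        · exact one_le_pow₀ hq
  have b1 : M * (M * q) * (M * q) ≤ M ^ 5 * q ^ 4 := by
    calc M * (M * q) * (M * q) = M ^ 3 * q ^ 2 := by ring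
      _ ≤ M ^ 5 * q ^ 4 := by gcongr <;> norm_num
  have := abs_sub s1 (s * w * w1)
  have : 0 < M ^ 5 * q ^ 4 := by positivity
  linarith

lemma k2_bound (s s1 s2 w w1 w2 M q : ℝ) (hM : 1 ≤ M) (hq : 1 ≤ q) (hs : |s| ≤ M)
    (hs1 : |s1| ≤ M) (hs2 : |s2| ≤ M)
    (hw : |w| ≤ M * q) (hw1 : |w1| ≤ M * q) (hw2 : |w2| ≤ M * q) :
    |k2 s s1 s2 w w1 w2| ≤ 6 * M ^ 5 * q ^ 4 * phi w := by
  unfold k2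
  rw [abs_mul, abs_of_pos (phi_pos w)]
  apply mul_le_mul_of_nonneg_right _ (phi_pos w).le
  have e1 : |s1 * w * w1| ≤ M * (M * q) * (M * q) := by
    rw [abs_mul, abs_mul]; gcongr
  have e2 : |s * w1 ^ 2| ≤ M * (M * q) ^ 2 := by
    rw [abs_mul, abs_pow]; gcongr
  have e3 : |s * w * w2| ≤ M * (M * q) * (M * q) := by
    rw [abs_mul, abs_mul]; gcongr
  have e4 : |s * w ^ 2 * w1 ^ 2| ≤ M * (M * q) ^ 2 * (M * q) ^ 2 := by
    rw [abs_mul, abs_mul, abs_pow, abs_pow]; gcongr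
  have b0 : M ≤ M ^ 5 * q ^ 4 := by
    calc M = M ^ 1 * 1 := by ring
      _ ≤ M ^ 5 * q ^ 4 := by
        gcongr
        · norm_num
        · exact one_le_pow₀ hq
  have b1 : M * (M * q) * (M * q) ≤ M ^ 5 * q ^ 4 := by
    calc M * (M * q) * (M * q) = M ^ 3 * q ^ 2 := by ring
      _ ≤ M ^ 5 * q ^ 4 := by gcongr <;> norm_num
  have b2 : M * (M * q) ^ 2 = M * (M * q) * (M * q) := by ring
  have b3 : M * (M * q) ^ 2 * (M * q) ^ 2 = M ^ 5 * q ^ 4 := by ring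
  have := abs_le.1 hs2
  have := abs_le.1 e1
  have := abs_le.1 e2
  have := abs_le.1 e3
  have := abs_le.1 e4
  rw [abs_le]
  constructor <;> linarith

structure Ker (U : Set ℝ) (M : ℝ) (s s1 s2 p p1 p2 : ℝ → ℝ) : Prop where
  hM : 1 ≤ M
  ds : ∀ r ∈ U, HasDerivAt s (s1 r) r
  ds1 : ∀ r ∈ U, HasDerivAt s1 (s2 r) r
  dp : ∀ r ∈ U, HasDerivAt p (p1 r) r
  dp1 : ∀ r ∈ U, HasDerivAt p1 (p2 r) r
  bs0 : ∀ r ∈ U, 1 / 2 ≤ s r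
  bs : ∀ r ∈ U, |s r| ≤ M
  bs1 : ∀ r ∈ U, |s1 r| ≤ M
  bs2 : ∀ r ∈ U, |s2 r| ≤ M
  bp : ∀ r ∈ U, |p r| ≤ 1
  bp1 : ∀ r ∈ U, |p1 r| ≤ M
  bp2 : ∀ r ∈ U, |p2 r| ≤ M

lemma lin_bound (a b z c M : ℝ) (hM : 1 ≤ M) (ha : |a| ≤ M) (hb : |b| ≤ M) :
    |a * z + b * c| ≤ M * ((1 + |c|) * (1 + |z|)) := by
  have h1 : |a * z| ≤ M * |z| := by rw [abs_mul]; gcongr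
  have h2 : |b * c| ≤ M * |c| := by rw [abs_mul]; gcongr
  have := abs_add_le (a * z) (b * c)
  have : 0 ≤ M * (|c| * |z|) := by positivity
  nlinarith

lemma phi_w_bound (s p z c : ℝ) (hs : 1 / 2 ≤ s) (hp : |p| ≤ 1) :
    phi (s * z + p * c) ≤ Real.exp (c ^ 2 / 2) * Real.exp (-(1 / 16) * z ^ 2) := by
  refine (phi_le _).trans ?_
  rw [← Real.exp_add]
  apply Real.exp_le_exp.2
  have h1 : p ^ 2 * c ^ 2 ≤ 1 * c ^ 2 := by
    have : p ^ 2 ≤ 1 := by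
      rw [← sq_abs]; nlinarith [abs_nonneg p]
    gcongr
  have h2 : (1 / 4) * z ^ 2 ≤ s ^ 2 * z ^ 2 := by
    have : 1 / 4 ≤ s ^ 2 := by nlinarith
    gcongr
  nlinarith [sq_nonneg (s * z + 2 * (p * c))]

lemma dom_bound (s p z c M x w : ℝ) (hM : 1 ≤ M) (hs : 1 / 2 ≤ s) (hp : |p| ≤ 1)
    (hw : w = s * z + p * c)
    (hx : |x| ≤ 6 * M ^ 5 * ((1 + |c|) * (1 + |z|)) ^ 4 * phi w) :
    |x| ≤ (6 * M ^ 5 * (1 + |c|) ^ 4 * 16384 * Real.exp (c ^ 2 / 2)) *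
      Real.exp (-(1 / 32) * z ^ 2) := by
  refine hx.trans ?_
  have h := phi_w_bound s p z c hs hp
  rw [← hw] at h
  calc 6 * M ^ 5 * ((1 + |c|) * (1 + |z|)) ^ 4 * phi w
      = 6 * M ^ 5 * (1 + |c|) ^ 4 * ((1 + |z|) ^ 4 * phi w) := by ring
    _ ≤ 6 * M ^ 5 * (1 + |c|) ^ 4 * ((16384 * Real.exp (z ^ 2 / 32)) *
        (Real.exp (c ^ 2 / 2) * Real.exp (-(1 / 16) * z ^ 2))) := by
        gcongr
        · exact (phi_pos w).le
        · exact poly_le_exp z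
    _ = (6 * M ^ 5 * (1 + |c|) ^ 4 * 16384 * Real.exp (c ^ 2 / 2)) *
        (Real.exp (z ^ 2 / 32) * Real.exp (-(1 / 16) * z ^ 2)) := by ring
    _ = _ := by
      rw [← Real.exp_add]; congr 2; ring

lemma kernel_deriv {U : Set ℝ} {M : ℝ} {s s1 s2 p p1 p2 : ℝ → ℝ}
    (K : Ker U M s s1 s2 p p1 p2) (hU : IsOpen U) (W : ℝ → ℝ) (hWm : Measurable W)
    (hW : ∀ z, |W z| ≤ 1) (c : ℝ) (r : ℝ) (hr : r ∈ U) :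
    HasDerivAt (fun r => ∫ z, W z * (s r * phi (s r * z + p r * c)))
      (∫ z, W z * k1 (s r) (s1 r) (s r * z + p r * c) (s1 r * z + p1 r * c)) r := by
  have hm := phi_cont.measurable
  refine (hasDerivAt_integral_of_dominated_loc_of_deriv_le
    (F := fun r z => W z * (s r * phi (s r * z + p r * c)))
    (F' := fun r z => W z * k1 (s r) (s1 r) (s r * z + p r * c) (s1 r * z + p1 r * c))
    (bound := fun z => (6 * M ^ 5 * (1 + |c|) ^ 4 * 16384 * Real.exp (c ^ 2 / 2)) *
      Real.exp (-(1 / 32) * z ^ 2)) (hU.mem_nhds hr) ?_ ?_ ?_ ?_ ?_ ?_).2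
  · exact Eventually.of_forall fun r => (by fun_prop : Measurable _).aestronglyMeasurable
  · have hs0 : s r ≠ 0 := by have := K.bs0 r hr; intro h; linarith
    have h1 : Integrable (fun z => phi (s r * z + p r * c)) :=
      (phi_integrable.comp_add_right (p r * c)).comp_mul_left' hs0
    refine (h1.const_mul (s r)).bdd_mul (c := 1) hWm.aestronglyMeasurable ?_
    exact ae_of_all _ fun z => hW z
  · unfold k1
    exact (by fun_prop : Measurable _).aestronglyMeasurable
  · refine ae_of_all _ fun z x hx => ?_
    rw [Real.norm_eq_abs, abs_mul]
    have hb := k1_bound (s x) (s1 x) (s x * z + p x * c) (s1 x * z + p1 x * c) M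
      ((1 + |c|) * (1 + |z|)) K.hM (one_le_mul_of_one_le_of_one_le (by simp) (by simp))
      (K.bs x hx) (K.bs1 x hx)
      (lin_bound _ _ _ _ _ K.hM (K.bs x hx) ((K.bp x hx).trans K.hM))
      (lin_bound _ _ _ _ _ K.hM (K.bs1 x hx) (K.bp1 x hx))
    refine le_trans ?_ (dom_bound (s x) (p x) z c M _ _ K.hM (K.bs0 x hx) (K.bp x hx) rfl hb)
    exact mul_le_of_le_one_left (abs_nonneg _) (hW z)
  · exact (integrable_exp_neg_mul_sq (by norm_num)).const_mul _
  · refine ae_of_all _ fun z x hx => ?_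
    apply HasDerivAt.const_mul
    have hw : HasDerivAt (fun r => s r * z + p r * c) (s1 x * z + p1 x * c) x :=
      ((K.ds x hx).mul_const z).add ((K.dp x hx).mul_const c)
    have := (K.ds x hx).mul ((phi_hasDerivAt _).comp x hw)
    refine this.congr_deriv ?_
    simp only [k1, Function.comp]
    ring

lemma kernel_deriv2 {U : Set ℝ} {M : ℝ} {s s1 s2 p p1 p2 : ℝ → ℝ}
    (K : Ker U M s s1 s2 p p1 p2) (hU : IsOpen U) (W : ℝ → ℝ) (hWm : Measurable W)
    (hW : ∀ z, |W z| ≤ 1) (c : ℝ) (r : ℝ) (hr : r ∈ U) :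
    HasDerivAt (fun r => ∫ z, W z * k1 (s r) (s1 r) (s r * z + p r * c) (s1 r * z + p1 r * c))
      (∫ z, W z * k2 (s r) (s1 r) (s2 r) (s r * z + p r * c) (s1 r * z + p1 r * c)
        (s2 r * z + p2 r * c)) r := by
  have hm := phi_cont.measurable
  have hk : ∀ r, Measurable fun z =>
      W z * k1 (s r) (s1 r) (s r * z + p r * c) (s1 r * z + p1 r * c) := by
    intro r; unfold k1; fun_prop
  have hI : Integrable fun z => (6 * M ^ 5 * (1 + |c|) ^ 4 * 16384 * Real.exp (c ^ 2 / 2)) *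
      Real.exp (-(1 / 32) * z ^ 2) :=
    (integrable_exp_neg_mul_sq (by norm_num)).const_mul _
  refine (hasDerivAt_integral_of_dominated_loc_of_deriv_le
    (F := fun r z => W z * k1 (s r) (s1 r) (s r * z + p r * c) (s1 r * z + p1 r * c))
    (F' := fun r z => W z * k2 (s r) (s1 r) (s2 r) (s r * z + p r * c) (s1 r * z + p1 r * c)
        (s2 r * z + p2 r * c))
    (bound := fun z => (6 * M ^ 5 * (1 + |c|) ^ 4 * 16384 * Real.exp (c ^ 2 / 2)) *
      Real.exp (-(1 / 32) * z ^ 2)) (hU.mem_nhds hr) ?_ ?_ ?_ ?_ hI ?_).2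
  · exact Eventually.of_forall fun r => (hk r).aestronglyMeasurable
  · refine hI.mono' (hk r).aestronglyMeasurable (ae_of_all _ fun z => ?_)
    rw [Real.norm_eq_abs, abs_mul]
    have hb := k1_bound (s r) (s1 r) (s r * z + p r * c) (s1 r * z + p1 r * c) M
      ((1 + |c|) * (1 + |z|)) K.hM (one_le_mul_of_one_le_of_one_le (by simp) (by simp))
      (K.bs r hr) (K.bs1 r hr)
      (lin_bound _ _ _ _ _ K.hM (K.bs r hr) ((K.bp r hr).trans K.hM))
      (lin_bound _ _ _ _ _ K.hM (K.bs1 r hr) (K.bp1 r hr))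
    refine le_trans ?_ (dom_bound (s r) (p r) z c M _ _ K.hM (K.bs0 r hr) (K.bp r hr) rfl hb)
    exact mul_le_of_le_one_left (abs_nonneg _) (hW z)
  · unfold k2
    exact (by fun_prop : Measurable _).aestronglyMeasurable
  · refine ae_of_all _ fun z x hx => ?_
    rw [Real.norm_eq_abs, abs_mul]
    have hb := k2_bound (s x) (s1 x) (s2 x) (s x * z + p x * c) (s1 x * z + p1 x * c)
      (s2 x * z + p2 x * c) M
      ((1 + |c|) * (1 + |z|)) K.hM (one_le_mul_of_one_le_of_one_le (by simp) (by simp))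
      (K.bs x hx) (K.bs1 x hx) (K.bs2 x hx)
      (lin_bound _ _ _ _ _ K.hM (K.bs x hx) ((K.bp x hx).trans K.hM))
      (lin_bound _ _ _ _ _ K.hM (K.bs1 x hx) (K.bp1 x hx))
      (lin_bound _ _ _ _ _ K.hM (K.bs2 x hx) (K.bp2 x hx))
    refine le_trans ?_ (dom_bound (s x) (p x) z c M _ _ K.hM (K.bs0 x hx) (K.bp x hx) rfl hb)
    exact mul_le_of_le_one_left (abs_nonneg _) (hW z)
  · refine ae_of_all _ fun z x hx => ?_
    apply HasDerivAt.const_mul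
    have hw : HasDerivAt (fun r => s r * z + p r * c) (s1 x * z + p1 x * c) x :=
      ((K.ds x hx).mul_const z).add ((K.dp x hx).mul_const c)
    have hw1 : HasDerivAt (fun r => s1 r * z + p1 r * c) (s2 x * z + p2 x * c) x :=
      ((K.ds1 x hx).mul_const z).add ((K.dp1 x hx).mul_const c)
    have := (((K.ds1 x hx).sub (((K.ds x hx).mul hw).mul hw1))).mul ((phi_hasDerivAt _).comp x hw)
    refine this.congr_deriv ?_
    simp only [k2, Function.comp, Pi.sub_apply, Pi.mul_apply]
    ring

/-- second derivative of the transported integral -/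
lemma kernel_second {U : Set ℝ} {M : ℝ} {s s1 s2 p p1 p2 : ℝ → ℝ}
    (K : Ker U M s s1 s2 p p1 p2) (hU : IsOpen U) (W : ℝ → ℝ) (hWm : Measurable W)
    (hW : ∀ z, |W z| ≤ 1) (c : ℝ) (ρ : ℝ) (hr : ρ ∈ U) (hs : s ρ = 1) (hp : p ρ = 0)
    (e : ℝ) (hWe : ∀ z, |W z| ≤ e * Real.exp (z ^ 2 / 4))
    (f : ℝ → ℝ) (hf : ∀ r ∈ U, f r = 1 - ∫ z, W z * (s r * phi (s r * z + p r * c))) :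
    |deriv (deriv f) ρ| ≤ (6 * M ^ 5 * 16384 * ∫ z : ℝ, Real.exp (-(1 / 8) * z ^ 2)) *
      ((1 + |c|) ^ 4 * e) := by
  have hd : ∀ r ∈ U, deriv f r =
      - ∫ z, W z * k1 (s r) (s1 r) (s r * z + p r * c) (s1 r * z + p1 r * c) := by
    intro r hr
    have h1 := (kernel_deriv K hU W hWm hW c r hr).const_sub 1
    refine (h1.congr_of_eventuallyEq ?_).deriv
    filter_upwards [hU.mem_nhds hr] with x hx using hf x hx
  have hd2 : deriv (deriv f) ρ = - ∫ z, W z * k2 (s ρ) (s1 ρ) (s2 ρ) (s ρ * z + p ρ * c)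
      (s1 ρ * z + p1 ρ * c) (s2 ρ * z + p2 ρ * c) := by
    have h1 := (kernel_deriv2 K hU W hWm hW c ρ hr).neg
    refine (h1.congr_of_eventuallyEq ?_).deriv
    filter_upwards [hU.mem_nhds hr] with x hx using hd x hx
  rw [hd2, abs_neg]
  have hM0 : 0 < M := lt_of_lt_of_le one_pos K.hM
  have he : 0 ≤ e := by
    have := (abs_nonneg _).trans (hWe 0)
    simpa using this
  have hI : Integrable fun z : ℝ => (6 * M ^ 5 * 16384 * ((1 + |c|) ^ 4 * e)) *
      Real.exp (-(1 / 8) * z ^ 2) :=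
    (integrable_exp_neg_mul_sq (by norm_num)).const_mul _
  rw [← Real.norm_eq_abs]
  refine (norm_integral_le_of_norm_le hI (ae_of_all _ fun z => ?_)).trans (le_of_eq ?_)
  · rw [Real.norm_eq_abs, abs_mul]
    have hb := k2_bound (s ρ) (s1 ρ) (s2 ρ) (s ρ * z + p ρ * c) (s1 ρ * z + p1 ρ * c)
      (s2 ρ * z + p2 ρ * c) M
      ((1 + |c|) * (1 + |z|)) K.hM (one_le_mul_of_one_le_of_one_le (by simp) (by simp))
      (K.bs ρ hr) (K.bs1 ρ hr) (K.bs2 ρ hr)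
      (lin_bound _ _ _ _ _ K.hM (K.bs ρ hr) ((K.bp ρ hr).trans K.hM))
      (lin_bound _ _ _ _ _ K.hM (K.bs1 ρ hr) (K.bp1 ρ hr))
      (lin_bound _ _ _ _ _ K.hM (K.bs2 ρ hr) (K.bp2 ρ hr))
    have hwz : s ρ * z + p ρ * c = z := by rw [hs, hp]; ring
    have hphi := phi_le z
    have hpo := poly_le_exp z
    calc |W z| * _ ≤ (e * Real.exp (z ^ 2 / 4)) *
          (6 * M ^ 5 * ((1 + |c|) * (1 + |z|)) ^ 4 * phi (s ρ * z + p ρ * c)) :=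
          mul_le_mul (hWe z) hb (abs_nonneg _) (by positivity)
      _ = (6 * M ^ 5 * ((1 + |c|) ^ 4 * e)) *
          (Real.exp (z ^ 2 / 4) * ((1 + |z|) ^ 4 * phi z)) := by
          rw [hwz]; ring
      _ ≤ (6 * M ^ 5 * ((1 + |c|) ^ 4 * e)) *
          (Real.exp (z ^ 2 / 4) * ((16384 * Real.exp (z ^ 2 / 32)) * Real.exp (-z ^ 2 / 2))) := by
          have := (phi_pos z).le
          gcongr
      _ = (6 * M ^ 5 * 16384 * ((1 + |c|) ^ 4 * e)) *
          (Real.exp (z ^ 2 / 4) * Real.exp (z ^ 2 / 32) * Real.exp (-z ^ 2 / 2)) := by ring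
      _ ≤ _ := by
          rw [← Real.exp_add, ← Real.exp_add]
          gcongr
          nlinarith [sq_nonneg z]
  · rw [integral_const_mul]; ring

noncomputable def sS (ρ r : ℝ) : ℝ :=
  Real.sqrt (1 - r) * Real.sqrt ρ / (Real.sqrt (1 - ρ) * Real.sqrt r)
noncomputable def pP (ρ r : ℝ) : ℝ := (Real.sqrt (1 - r) / Real.sqrt (1 - ρ) - 1) / Real.sqrt r

lemma smooth_nhds (f : ℝ → ℝ) (hf : ContDiffOn ℝ 3 f (Set.Ioo 0 1)) (ρ : ℝ)
    (hρ : ρ ∈ Set.Ioo (0:ℝ) 1) :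
    (∀ r ∈ Set.Ioo (0:ℝ) 1, HasDerivAt f (deriv f r) r ∧
      HasDerivAt (deriv f) (deriv (deriv f) r) r) ∧
    ContinuousAt f ρ ∧ ContinuousAt (deriv f) ρ ∧ ContinuousAt (deriv (deriv f)) ρ := by
  have h1 : ContDiffOn ℝ 2 (deriv f) (Set.Ioo 0 1) :=
    hf.deriv_of_isOpen isOpen_Ioo (by norm_num)
  have h2 : ContDiffOn ℝ 1 (deriv (deriv f)) (Set.Ioo 0 1) :=
    h1.deriv_of_isOpen isOpen_Ioo (by norm_num)
  refine ⟨fun r hr => ⟨?_, ?_⟩, ?_, ?_, ?_⟩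
  · exact ((hf.contDiffAt (isOpen_Ioo.mem_nhds hr)).differentiableAt (by norm_num)).hasDerivAt
  · exact ((h1.contDiffAt (isOpen_Ioo.mem_nhds hr)).differentiableAt (by norm_num)).hasDerivAt
  · exact hf.continuousOn.continuousAt (isOpen_Ioo.mem_nhds hρ)
  · exact h1.continuousOn.continuousAt (isOpen_Ioo.mem_nhds hρ)
  · exact h2.continuousOn.continuousAt (isOpen_Ioo.mem_nhds hρ)

lemma exists_ker (ρ : ℝ) (hρ : ρ ∈ Set.Ioo (0:ℝ) 1) :
    ∃ U M, IsOpen U ∧ ρ ∈ U ∧ U ⊆ Set.Ioo 0 1 ∧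
      Ker U M (sS ρ) (deriv (sS ρ)) (deriv (deriv (sS ρ)))
        (pP ρ) (deriv (pP ρ)) (deriv (deriv (pP ρ))) := by
  have hσ : 0 < Real.sqrt (1 - ρ) := Real.sqrt_pos.2 (by linarith [hρ.2])
  have hτ : 0 < Real.sqrt ρ := Real.sqrt_pos.2 hρ.1
  have c1 : ContDiffOn ℝ 3 (fun r => Real.sqrt r) (Set.Ioo 0 1) :=
    contDiffOn_id.sqrt (fun x hx => hx.1.ne')
  have c2 : ContDiffOn ℝ 3 (fun r => Real.sqrt (1 - r)) (Set.Ioo 0 1) :=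
    (contDiffOn_const.sub contDiffOn_id).sqrt
      (fun x hx => by have := hx.2; simp only [id]; intro h; linarith)
  have hs : ContDiffOn ℝ 3 (sS ρ) (Set.Ioo 0 1) := by
    unfold sS
    refine (c2.mul contDiffOn_const).div (contDiffOn_const.mul c1) fun x hx => ?_
    have := Real.sqrt_pos.2 hx.1
    positivity
  have hp : ContDiffOn ℝ 3 (pP ρ) (Set.Ioo 0 1) := by
    unfold pP
    refine ((c2.div_const _).sub contDiffOn_const).div c1 fun x hx => ?_
    exact (Real.sqrt_pos.2 hx.1).ne'
  obtain ⟨s0, s1, s2, s3⟩ := smooth_nhds _ hs ρ hρ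
  obtain ⟨p0, p1, p2, p3⟩ := smooth_nhds _ hp ρ hρ
  have es : sS ρ ρ = 1 := by unfold sS; field_simp
  have ep : pP ρ ρ = 0 := by unfold pP; rw [div_self hσ.ne']; simp
  set M : ℝ := 1 + |sS ρ ρ| + |deriv (sS ρ) ρ| + |deriv (deriv (sS ρ)) ρ| + |deriv (pP ρ) ρ|
    + |deriv (deriv (pP ρ)) ρ| + 1 with hM
  have n0 := abs_nonneg (sS ρ ρ)
  have n1 := abs_nonneg (deriv (sS ρ) ρ)
  have n2 := abs_nonneg (deriv (deriv (sS ρ)) ρ)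
  have n3 := abs_nonneg (deriv (pP ρ) ρ)
  have n4 := abs_nonneg (deriv (deriv (pP ρ)) ρ)
  have ev : ∀ᶠ r in nhds ρ, r ∈ Set.Ioo (0:ℝ) 1 ∧ 1 / 2 < sS ρ r ∧ |sS ρ r| < M ∧
      |deriv (sS ρ) r| < M ∧ |deriv (deriv (sS ρ)) r| < M ∧ |pP ρ r| < 1 ∧
      |deriv (pP ρ) r| < M ∧ |deriv (deriv (pP ρ)) r| < M := by
    refine (isOpen_Ioo.eventually_mem hρ).and ((s1.eventually_const_lt (by rw [es]; norm_num)).and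
      ((s1.abs.eventually_lt_const (by linarith)).and
      ((s2.abs.eventually_lt_const (by linarith)).and
      ((s3.abs.eventually_lt_const (by linarith)).and
      ((p1.abs.eventually_lt_const (by simp [ep])).and
      ((p2.abs.eventually_lt_const (by linarith)).and
      (p3.abs.eventually_lt_const (by linarith))))))))
  obtain ⟨U, hU, hUo, hρU⟩ := eventually_nhds_iff.1 ev
  refine ⟨U, M, hUo, hρU, fun r hr => (hU r hr).1, ⟨by linarith, ?_, ?_, ?_, ?_, ?_, ?_, ?_, ?_, ?_, ?_, ?_⟩⟩
    <;> intro r hr <;> obtain ⟨a1, a2, a3, a4, a5, a6, a7, a8⟩ := hU r hr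
  exacts [(s0 r a1).1, (s0 r a1).2, (p0 r a1).1, (p0 r a1).2, a2.le, a3.le, a4.le, a5.le, a6.le,
    a7.le, a8.le]

lemma subst_integral (g : ℝ → ℝ) (a b : ℝ) (ha : 0 < a) :
    ∫ z, a * g (a * z + b) = ∫ z, g z := by
  rw [integral_const_mul, Measure.integral_comp_mul_left (fun y => g (y + b)),
    integral_add_right_eq_self, abs_of_pos (inv_pos.2 ha), smul_eq_mul, mul_inv_cancel_left₀ ha.ne']

lemma Hn_repr (n : ℕ) (ρ r c : ℝ) (hρ : ρ ∈ Set.Ioo (0:ℝ) 1) (hr : r ∈ Set.Ioo (0:ℝ) 1) :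
    Hn n r c = 1 - ∫ z, (1 - Phi (dd ρ c z) ^ n) * (sS ρ r * phi (sS ρ r * z + pP ρ r * c)) := by
  have h1 : 0 < Real.sqrt (1 - ρ) := Real.sqrt_pos.2 (by linarith [hρ.2])
  have h2 : 0 < Real.sqrt ρ := Real.sqrt_pos.2 hρ.1
  have h3 : 0 < Real.sqrt (1 - r) := Real.sqrt_pos.2 (by linarith [hr.2])
  have h4 : 0 < Real.sqrt r := Real.sqrt_pos.2 hr.1
  have hs : 0 < sS ρ r := by unfold sS; positivity
  have hI : Integrable fun z => sS ρ r * phi (sS ρ r * z + pP ρ r * c) :=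
    ((phi_integrable.comp_add_right (pP ρ r * c)).comp_mul_left' hs.ne').const_mul _
  have hone : ∫ z, sS ρ r * phi (sS ρ r * z + pP ρ r * c) = 1 := by
    rw [subst_integral phi _ _ hs, phi_integral]
  have hm : Measurable fun z => Phi (dd ρ c z) ^ n := by
    have := Phi_mono.measurable
    unfold dd; fun_prop
  have hI2 : Integrable fun z => Phi (dd ρ c z) ^ n *
      (sS ρ r * phi (sS ρ r * z + pP ρ r * c)) := by
    refine hI.bdd_mul (c := 1) hm.aestronglyMeasurable (ae_of_all _ fun z => ?_)
    rw [Real.norm_eq_abs, abs_of_nonneg (pow_nonneg (Phi_nonneg _) _)]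
    exact pow_le_one₀ (Phi_nonneg _) (Phi_le_one _)
  have hd : ∀ z, dd r c (sS ρ r * z + pP ρ r * c) = dd ρ c z := by
    intro z; unfold dd sS pP; field_simp; ring
  have e1 : Hn n r c = ∫ z, Phi (dd ρ c z) ^ n *
      (sS ρ r * phi (sS ρ r * z + pP ρ r * c)) := by
    unfold Hn
    rw [← subst_integral _ (sS ρ r) (pP ρ r * c) hs]
    congr 1; funext z
    rw [hd]; ring
  rw [e1]
  simp_rw [sub_mul, one_mul]
  rw [integral_sub hI hI2, hone]
  ring

lemma tendsto_poly_exp (a : ℝ) (ha : 0 < a) (c : ℕ → ℝ) (hc : Tendsto c atTop atTop) :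
    Tendsto (fun n => (1 + |c n|) ^ 4 * Real.exp (-a * c n ^ 2)) atTop (nhds 0) := by
  have hy : Tendsto (fun n => a * (1 + c n ^ 2)) atTop atTop :=
    (tendsto_atTop_add_const_left _ 1 ((tendsto_pow_atTop two_ne_zero).comp hc)).const_mul_atTop ha
  have h := ((Real.tendsto_pow_mul_exp_neg_atTop_nhds_zero 2).comp hy).const_mul
    (4 * Real.exp a / a ^ 2)
  rw [mul_zero] at h
  refine squeeze_zero (fun n => by positivity) (fun n => ?_) h
  have h1 : (1 + |c n|) ^ 2 ≤ 2 * (1 + c n ^ 2) := by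
    nlinarith [sq_abs (c n), sq_nonneg (1 - |c n|)]
  have h2 : (1 + |c n|) ^ 4 ≤ 4 * (1 + c n ^ 2) ^ 2 := by
    calc (1 + |c n|) ^ 4 = ((1 + |c n|) ^ 2) ^ 2 := by ring
      _ ≤ (2 * (1 + c n ^ 2)) ^ 2 := by gcongr
      _ = _ := by ring
  have h3 : Real.exp (-a * c n ^ 2) = Real.exp a * Real.exp (-(a * (1 + c n ^ 2))) := by
    rw [← Real.exp_add]; congr 1; ring
  calc _ ≤ 4 * (1 + c n ^ 2) ^ 2 * Real.exp (-a * c n ^ 2) := by gcongr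
    _ = _ := by
      rw [h3]; simp only [Function.comp]; field_simp

lemma W_bound (ρ : ℝ) (hρ : ρ ∈ Set.Ioo (0:ℝ) 1) : ∃ ε κ : ℝ, 0 < ε ∧ 1 < κ ∧
    ∀ (n : ℕ) (c : ℝ), 0 < c → ∀ z, |1 - Phi (dd ρ c z) ^ n| ≤
      (Real.exp (-(ε ^ 2 / 4) * c ^ 2) +
        (n * Phi (-c)) * κ * Real.exp (-((κ ^ 2 - 1) / 2) * c ^ 2)) * Real.exp (z ^ 2 / 4) := by
  set σ := Real.sqrt (1 - ρ) with hσd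
  set τ := Real.sqrt ρ with hτd
  have hσ : 0 < σ := Real.sqrt_pos.2 (by linarith [hρ.2])
  have hσ1 : σ < 1 := by
    rw [hσd, Real.sqrt_lt' one_pos]; linarith [hρ.1]
  have hτ : 0 < τ := Real.sqrt_pos.2 hρ.1
  refine ⟨(1 - σ) / (2 * τ), (1 + σ) / (2 * σ), ?_, ?_, ?_⟩
  · apply div_pos <;> linarith
  · rw [one_lt_div (by positivity)]; linarith
  intro n c hc z
  set ε := (1 - σ) / (2 * τ) with hε
  set κ := (1 + σ) / (2 * σ) with hκ
  have hε0 : 0 < ε := by apply div_pos <;> linarith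
  have hκ1 : 1 < κ := by rw [hκ, one_lt_div (by positivity)]; linarith
  have hP0 := Phi_nonneg (dd ρ c z)
  have hP1 := Phi_le_one (dd ρ c z)
  have hpw : Phi (dd ρ c z) ^ n ≤ 1 := pow_le_one₀ hP0 hP1
  have hpw0 : 0 ≤ Phi (dd ρ c z) ^ n := pow_nonneg hP0 n
  rw [abs_of_nonneg (by linarith)]
  have hPc := Phi_nonneg (-c)
  have hB : 0 ≤ (n * Phi (-c)) * κ * Real.exp (-((κ ^ 2 - 1) / 2) * c ^ 2) := by
    have : 0 < κ := by linarith
    positivity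
  have hE1 : 1 ≤ Real.exp (z ^ 2 / 4) := Real.one_le_exp (by positivity)
  rw [add_mul]
  rcases lt_or_ge z (-(ε * c)) with hz | hz
  · have : 1 ≤ Real.exp (-(ε ^ 2 / 4) * c ^ 2) * Real.exp (z ^ 2 / 4) := by
      rw [← Real.exp_add]
      apply Real.one_le_exp
      have : 0 < ε * c := by positivity
      nlinarith
    have := mul_nonneg hB (zero_le_one.trans hE1)
    linarith
  · have hd : κ * c ≤ dd ρ c z := by
      unfold dd
      rw [← hσd, ← hτd, le_div_iff₀ hσ]
      have e1 : κ * c * σ = (1 + σ) / 2 * c := by rw [hκ]; field_simp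
      have e2 : τ * (ε * c) = (1 - σ) / 2 * c := by rw [hε]; field_simp
      rw [e1]
      nlinarith [mul_le_mul_of_nonneg_left hz hτ.le]
    have hbern := one_add_mul_le_pow (a := -(Phi (-(dd ρ c z)))) (by
      linarith [Phi_le_one (-(dd ρ c z))]) n
    have hadd := Phi_add (dd ρ c z)
    have h1 : 1 + -(Phi (-(dd ρ c z))) = Phi (dd ρ c z) := by linarith
    rw [h1] at hbern
    have h2 : Phi (-(dd ρ c z)) ≤ Phi (-(κ * c)) := Phi_mono (by linarith)
    have h3 := h2.trans (Phi_scale κ c hκ1 hc)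
    have h4 : (n : ℝ) * Phi (-(dd ρ c z)) ≤
        n * (κ * Real.exp (-(κ ^ 2 - 1) * c ^ 2 / 2) * Phi (-c)) := by gcongr
    have h5 : n * (κ * Real.exp (-(κ ^ 2 - 1) * c ^ 2 / 2) * Phi (-c)) =
      (n * Phi (-c)) * κ * Real.exp (-((κ ^ 2 - 1) / 2) * c ^ 2) := by
      have : -(κ ^ 2 - 1) * c ^ 2 / 2 = -((κ ^ 2 - 1) / 2) * c ^ 2 := by ring
      rw [this]; ring
    have h6 := le_mul_of_one_le_right hB hE1
    have h7 : 0 ≤ Real.exp (-(ε ^ 2 / 4) * c ^ 2) * Real.exp (z ^ 2 / 4) := by positivity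
    linarith

theorem limsup_second_deriv_Hn_nonpos
    (ρ : ℝ) (hρ : ρ ∈ Set.Ioo (0:ℝ) 1) (α : ℝ) (hα : α ∈ Set.Ioo (0:ℝ) 1)
    (αseq : ℕ → ℝ) (hαseq : ∀ n, αseq n ∈ Set.Ioo (0:ℝ) 1)
    (hlim : Tendsto (fun n : ℕ => (n : ℝ) * αseq n) atTop (nhds α))
    (c : ℕ → ℝ) (hc : ∀ n, Phi (-(c n)) = αseq n) :
    limsup (fun n : ℕ => deriv (deriv (fun r => Hn n r (c n))) ρ) atTop ≤ 0 := by
  have hα0 : Tendsto αseq atTop (nhds 0) := by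
    have h := hlim.mul (tendsto_inv_atTop_nhds_zero_nat (𝕜 := ℝ))
    rw [mul_zero] at h
    refine h.congr' ?_
    filter_upwards [eventually_gt_atTop 0] with n hn
    have : (n : ℝ) ≠ 0 := by positivity
    field_simp
  have hcT : Tendsto c atTop atTop := by
    rw [tendsto_atTop]
    intro b
    filter_upwards [hα0.eventually_lt_const (Phi_pos (-b))] with n hn
    by_contra hlt
    have := Phi_mono (show -b ≤ -(c n) by linarith)
    rw [hc] at this
    linarith
  obtain ⟨U, M, hU, hρU, hUs, K⟩ := exists_ker ρ hρ
  obtain ⟨ε, κ, hε, hκ, hW⟩ := W_bound ρ hρ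
  have es : sS ρ ρ = 1 := by
    have hσ : 0 < Real.sqrt (1 - ρ) := Real.sqrt_pos.2 (by linarith [hρ.2])
    have hτ : 0 < Real.sqrt ρ := Real.sqrt_pos.2 hρ.1
    unfold sS; field_simp
  have ep : pP ρ ρ = 0 := by
    have hσ : 0 < Real.sqrt (1 - ρ) := Real.sqrt_pos.2 (by linarith [hρ.2])
    unfold pP; rw [div_self hσ.ne']; simp
  have hT : Tendsto (fun n : ℕ => (6 * M ^ 5 * 16384 * ∫ z : ℝ, Real.exp (-(1 / 8) * z ^ 2)) *
      ((1 + |c n|) ^ 4 * (Real.exp (-(ε ^ 2 / 4) * c n ^ 2) +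
        (n * Phi (-(c n))) * κ * Real.exp (-((κ ^ 2 - 1) / 2) * c n ^ 2)))) atTop (nhds 0) := by
    have t1 := tendsto_poly_exp (ε ^ 2 / 4) (by positivity) c hcT
    have t2 := tendsto_poly_exp ((κ ^ 2 - 1) / 2) (by nlinarith) c hcT
    have t3 := (t1.add ((hlim.mul_const κ).mul t2)).const_mul
      (6 * M ^ 5 * 16384 * ∫ z : ℝ, Real.exp (-(1 / 8) * z ^ 2))
    simp only [mul_zero, add_zero] at t3
    refine t3.congr fun n => ?_
    rw [hc]; ring
  have hmain : Tendsto (fun n : ℕ => deriv (deriv (fun r => Hn n r (c n))) ρ) atTop (nhds 0) := by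
    refine squeeze_zero_norm' ?_ hT
    filter_upwards [hcT.eventually_gt_atTop 0] with n hn
    rw [Real.norm_eq_abs]
    refine kernel_second K hU (fun z => 1 - Phi (dd ρ (c n) z) ^ n) ?_ ?_ (c n) ρ hρU es ep _
      (hW n (c n) hn) _ ?_
    · have := Phi_mono.measurable
      unfold dd; fun_prop
    · intro z
      have hP0 := Phi_nonneg (dd ρ (c n) z)
      have hP1 := Phi_le_one (dd ρ (c n) z)
      have hpw : Phi (dd ρ (c n) z) ^ n ≤ 1 := pow_le_one₀ hP0 hP1
      have hpw0 : 0 ≤ Phi (dd ρ (c n) z) ^ n := pow_nonneg hP0 n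
      rw [abs_le]; constructor <;> linarith
    · intro r hr
      exact Hn_repr n ρ r (c n) hρ (hUs hr)
  exact hmain.limsup_eq.le
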